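/- Let d ≥ 2, let H be a d×d Hermitian matrix and ρ a d×d density matrix such that ΔH := H − (Tr[H]/d)·I and Δρ := ρ − I/d are both nonzero. Set μ := Tr[H]/d, Σ^(p) := ∫_{U(d)} (Tr[UρU†H] − μ)^p dμ_Haar(U), Σ² := Tr[ΔH²]·Tr[Δρ²]/(d²−1), Σ_G^(p) := (p−1)!!·(Σ²)^{p/2} for p even and Σ_G^(p) := 0 for p odd, and N* := min{⌊√d⌋, ⌊(d/(2√3))^{4/7}⌋}. Then for every real t with |t| < min{√(N*/Σ²), N*/ΔE_max}, the tail of the moment series satisfies Σ_{p=N*}^{∞} (|t|^p/p!)·|Σ^(p) − Σ_G^(p)| ≤ (1/⌈N*/2⌉!) · t²Σ²/(1 − t²Σ²/N*) + (1/N*!) · |t|·ΔE_max/(1 − |t|·ΔE_max/N*). -/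

import Mathlib

open MeasureTheory Matrix
open scoped ComplexOrder

noncomputable instance unitaryGroup.measurableSpace (d : ℕ) :
    MeasurableSpace (Matrix.unitaryGroup (Fin d) ℂ) := borel _

instance unitaryGroup.borelSpace (d : ℕ) :
    BorelSpace (Matrix.unitaryGroup (Fin d) ℂ) := ⟨rfl⟩

theorem summable_and_tsum_le_of_even_odd_geometric {T : ℕ → ℝ} (hT : ∀ p, 0 ≤ T p) {a b r : ℝ}
    (hr0 : 0 ≤ r) (hr1 : r < 1) (heven : ∀ j, T (2 * j) ≤ a * r ^ j)
    (hodd : ∀ j, T (2 * j + 1) ≤ b * r ^ j) :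
    Summable T ∧ ∑' p, T p ≤ (a + b) / (1 - r) := by
  have hgeo := summable_geometric_of_lt_one hr0 hr1
  have he : Summable fun j => T (2 * j) :=
    Summable.of_nonneg_of_le (fun _ => hT _) heven (hgeo.mul_left a)
  have ho : Summable fun j => T (2 * j + 1) :=
    Summable.of_nonneg_of_le (fun _ => hT _) hodd (hgeo.mul_left b)
  refine ⟨(he.hasSum.even_add_odd ho.hasSum).summable, ?_⟩
  rw [← tsum_even_add_odd he ho, add_div]
  have h1 := he.tsum_le_tsum heven (hgeo.mul_left a)
  have h2 := ho.tsum_le_tsum hodd (hgeo.mul_left b)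
  rw [tsum_mul_left, tsum_geometric_of_lt_one hr0 hr1] at h1 h2
  simpa [div_eq_mul_inv] using add_le_add h1 h2

theorem factorial_mul_two_pow_le (m j : ℕ) :
    (2 : ℝ) ^ m * m.factorial * (2 * (m + 1)) ^ j ≤ 2 ^ (m + j) * (m + j).factorial := by
  have h : (m.factorial * (m + 1) ^ j : ℕ) ≤ (m + j).factorial := Nat.factorial_mul_pow_le_factorial
  have h' : (m.factorial : ℝ) * (m + 1) ^ j ≤ (m + j).factorial := by exact_mod_cast h
  calc (2 : ℝ) ^ m * m.factorial * (2 * (m + 1)) ^ j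
      = 2 ^ (m + j) * (m.factorial * (m + 1) ^ j) := by rw [mul_pow, pow_add]; ring
    _ ≤ _ := by gcongr

/-- The tail from `2 * m` of a series with Gaussian-type term bounds. -/
theorem gaussian_type_tail_le {T : ℕ → ℝ} (hT : ∀ p, 0 ≤ T p) {x y : ℝ} (hx : 0 ≤ x) (hy : 0 ≤ y)
    (heven : ∀ k, 1 ≤ k → T (2 * k) ≤ x / (2 ^ k * k.factorial))
    (hodd : ∀ k, 1 ≤ k → T (2 * k + 1) ≤ y / (2 * k + 1) * (x / (2 ^ k * k.factorial)))
    {m : ℕ} (hm : 1 ≤ m) :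
    Summable (fun k => T (2 * m + k)) ∧ ∑' k, T (2 * m + k) ≤
      (1 + y / (2 * m + 1)) * (x / (2 ^ m * m.factorial)) * ((2 * m + 2) / (2 * m + 1)) := by
  have hmr : (1 : ℝ) ≤ m := by exact_mod_cast hm
  set r : ℝ := (2 * (m + 1))⁻¹ with hr
  have hr0 : 0 ≤ r := by positivity
  have hr1 : r < 1 := inv_lt_one_of_one_lt₀ (by linarith)
  have key : ∀ j, x / (2 ^ (m + j) * (m + j).factorial) ≤ x / (2 ^ m * m.factorial) * r ^ j := by
    intro j
    rw [hr, inv_pow, ← div_eq_mul_inv, div_div]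
    exact div_le_div_of_nonneg_left hx (by positivity) (factorial_mul_two_pow_le m j)
  obtain ⟨h1, h2⟩ := summable_and_tsum_le_of_even_odd_geometric (T := fun k => T (2 * m + k))
    (a := x / (2 ^ m * m.factorial)) (b := y / (2 * m + 1) * (x / (2 ^ m * m.factorial)))
    (fun _ => hT _) hr0 hr1
    (fun j => by
      have := heven (m + j) (by omega)
      rw [mul_add] at this
      exact this.trans (key j))
    (fun j => by
      have := hodd (m + j) (by omega)
      rw [mul_add, add_assoc] at this
      refine this.trans ?_
      rw [mul_assoc]
      refine mul_le_mul ?_ (key j) (by positivity) (by positivity)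
      refine div_le_div_of_nonneg_left hy (by positivity) ?_
      push_cast
      linarith [(Nat.cast_nonneg j : (0 : ℝ) ≤ j)])
  refine ⟨h1, h2.trans (le_of_eq ?_)⟩
  have : (1 - r) = (2 * m + 1) / (2 * m + 2) := by rw [hr]; field_simp; ring
  rw [this]
  field_simp

theorem tail_le_of_gaussian_type_bounds {T : ℕ → ℝ} (hT : ∀ p, 0 ≤ T p) {x y : ℝ} (hx : 0 ≤ x)
    (hx1 : x ≤ 1) (hy : 0 ≤ y) {N : ℕ} (hN : 1 ≤ N) (hyN : y < N) (hxy : x * N ≤ y)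
    (hone : T 1 ≤ y)
    (heven : ∀ k, 1 ≤ k → T (2 * k) ≤ x / (2 ^ k * k.factorial))
    (hodd : ∀ k, 1 ≤ k → T (2 * k + 1) ≤ y / (2 * k + 1) * (x / (2 ^ k * k.factorial))) :
    Summable (fun k => T (N + k)) ∧
      ∑' k, T (N + k) ≤ x / ((N + 1) / 2).factorial + y / N.factorial := by
  rcases Nat.even_or_odd' N with ⟨m, rfl | rfl⟩
  · have hm : 1 ≤ m := by omega
    obtain ⟨h1, h2⟩ := gaussian_type_tail_le hT hx hy heven hodd hm
    refine ⟨h1, h2.trans ?_⟩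
    rw [show (2 * m + 1) / 2 = m by omega]
    rcases hm.eq_or_lt with rfl | hm
    · norm_num at hyN hxy ⊢
      nlinarith
    · push_cast at hyN
      have hmr : (2 : ℝ) ≤ m := by exact_mod_cast hm
      have h3 : 1 + y / (2 * m + 1) ≤ 2 := by
        have : y / (2 * m + 1) ≤ 1 := by rw [div_le_one (by positivity)]; linarith
        linarith
      have h4 : ((2 * m + 2) / (2 * m + 1) : ℝ) ≤ 2 := by
        rw [div_le_iff₀ (by positivity)]; linarith
      have h5 : (4 : ℝ) ≤ 2 ^ m := by
        calc (4 : ℝ) = 2 ^ 2 := by norm_num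
          _ ≤ 2 ^ m := pow_le_pow_right₀ (by norm_num) hm
      have h6 : x / (2 ^ m * m.factorial) ≤ x / m.factorial / 4 := by
        rw [div_div, mul_comm (m.factorial : ℝ)]
        gcongr
      calc _ ≤ 2 * (x / m.factorial / 4) * 2 := by gcongr
        _ = x / m.factorial := by ring
        _ ≤ _ := le_add_of_nonneg_right (by positivity)
  · have hm : 1 ≤ m + 1 := by omega
    obtain ⟨h1, h2⟩ := gaussian_type_tail_le hT hx hy heven hodd hm
    have hshift : (fun k => T (2 * m + 1 + (k + 1))) = fun k => T (2 * (m + 1) + k) := by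
      funext k; congr 1; ring
    have hs : Summable fun k => T (2 * m + 1 + k) := by
      rw [← summable_nat_add_iff 1, hshift]; exact h1
    refine ⟨hs, ?_⟩
    rw [hs.tsum_eq_zero_add, hshift, add_zero, show (2 * m + 1 + 1) / 2 = m + 1 by omega]
    rcases Nat.eq_zero_or_pos m with rfl | hm0
    · norm_num at h2 hyN ⊢
      nlinarith
    · push_cast at hyN h2
      have hmr : (1 : ℝ) ≤ m := by exact_mod_cast hm0
      have hF := hodd m hm0
      have hq : y / (2 * m + 1) ≤ 1 := by rw [div_le_one (by positivity)]; linarith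
      have hq' : 1 + y / (2 * (m + 1) + 1) ≤ 2 := by
        have : y / (2 * (m + 1) + 1) ≤ 1 := by rw [div_le_one (by positivity)]; linarith
        linarith
      have h4 : ((2 * (m + 1) + 2) / (2 * (m + 1) + 1) : ℝ) ≤ 6 / 5 := by
        rw [div_le_div_iff₀ (by positivity) (by norm_num)]; linarith
      have hrest : ∑' k, T (2 * (m + 1) + k) ≤
          2 * (x / (2 ^ (m + 1) * (m + 1).factorial)) * (6 / 5) :=
        h2.trans (by gcongr)
      by_cases hm3 : 3 ≤ m
      · have hpow : ∀ n : ℕ, 3 ≤ n → (2 * (n + 1) : ℝ) ≤ 2 ^ n := by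
          intro n hn
          induction n, hn using Nat.le_induction with
          | base => norm_num
          | succ n hn ih => rw [pow_succ]; push_cast; linarith
        have hp := hpow m hm3
        have hF' : T (2 * m + 1) ≤ x / (m + 1).factorial / 2 := by
          refine hF.trans ((mul_le_of_le_one_left (by positivity) hq).trans ?_)
          rw [div_div, Nat.factorial_succ]
          push_cast
          refine div_le_div_of_nonneg_left hx (by positivity) ?_
          nlinarith [(Nat.cast_pos.2 m.factorial_pos : (0 : ℝ) < m.factorial)]
        have hp8 : (16 : ℝ) ≤ 2 ^ (m + 1) := by
          calc (16 : ℝ) = 2 ^ 4 := by norm_num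
            _ ≤ 2 ^ (m + 1) := pow_le_pow_right₀ (by norm_num) (by omega)
        have h6 : x / (2 ^ (m + 1) * (m + 1).factorial) ≤ x / (m + 1).factorial / 16 := by
          rw [div_div, mul_comm ((m + 1).factorial : ℝ)]
          gcongr
        have : 0 ≤ x / (m + 1).factorial := by positivity
        have : 0 ≤ y / (2 * m + 1).factorial := by positivity
        linarith
      · interval_cases m
        · norm_num [Nat.factorial] at hF hrest hyN ⊢
          nlinarith
        · norm_num [Nat.factorial] at hF hrest hyN ⊢
          nlinarith

theorem Matrix.IsHermitian.exists_unitary_diagonal {n : Type*} [Fintype n] [DecidableEq n]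
    {A : Matrix n n ℂ} (hA : A.IsHermitian) :
    ∃ V : Matrix.unitaryGroup n ℂ, A = (V : Matrix n n ℂ) *
      diagonal (fun i => (hA.eigenvalues i : ℂ)) * star (V : Matrix n n ℂ) :=
  ⟨hA.eigenvectorUnitary, by
    conv_lhs => rw [hA.spectral_theorem]
    rfl⟩

theorem normSq_mem_doublyStochastic {n : Type*} [Fintype n] [DecidableEq n]
    (M : Matrix.unitaryGroup n ℂ) :
    (Matrix.of fun i j => Complex.normSq ((M : Matrix n n ℂ) i j)) ∈ doublyStochastic ℝ n := by
  rw [mem_doublyStochastic_iff_sum]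
  refine ⟨fun i j => Complex.normSq_nonneg _, fun i => ?_, fun j => ?_⟩
  · have h := congrFun (congrFun (Unitary.coe_mul_star_self M) i) i
    simp only [mul_apply, Unitary.coe_star, star_apply, one_apply_eq, RCLike.star_def,
      Complex.mul_conj] at h
    exact_mod_cast h
  · have h := congrFun (congrFun (Unitary.coe_star_mul_self M) j) j
    simp only [mul_apply, star_apply, one_apply_eq, RCLike.star_def,
      ← Complex.normSq_eq_conj_mul_self] at h
    exact_mod_cast h

theorem sum_mul_mul_doublyStochastic_le {n : Type*} [Fintype n] [DecidableEq n]
    {S : Matrix n n ℝ} (hS : S ∈ doublyStochastic ℝ n) (h l : n → ℝ) (c : ℝ)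
    (hc : ∀ σ : Equiv.Perm n, ∑ i, h i * l (σ i) ≤ c) :
    ∑ i, ∑ j, S i j * (h i * l j) ≤ c := by
  obtain ⟨w, hw0, hw1, rfl⟩ := exists_eq_sum_perm_of_mem_doublyStochastic hS
  calc ∑ i, ∑ j, (∑ σ, w σ • Equiv.Perm.permMatrix ℝ σ) i j * (h i * l j)
      = ∑ σ, w σ * ∑ i, h i * l (σ i) := by
        simp only [Matrix.sum_apply, Finset.sum_mul, Finset.mul_sum, Matrix.smul_apply]
        rw [Finset.sum_comm' (t' := Finset.univ) (s' := fun _ => Finset.univ) (by simp)]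
        conv_lhs => enter [2, j]; rw [Finset.sum_comm]
        rw [Finset.sum_comm]
        refine Finset.sum_congr rfl fun σ _ => ?_
        rw [Finset.sum_comm]
        refine Finset.sum_congr rfl fun i _ => ?_
        rw [Finset.sum_eq_single (σ i)]
        · simp [Equiv.Perm.permMatrix, PEquiv.toMatrix_apply]
        · intro j _ hj
          simp [Equiv.Perm.permMatrix, PEquiv.toMatrix_apply, Ne.symm hj]
        · simp
    _ ≤ ∑ σ, w σ * c := by
        gcongr with σ
        · exact hw0 σ
        · exact hc σ
    _ = c := by rw [← Finset.sum_mul, hw1, one_mul]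

theorem trace_conj_mul_re_eq {n : Type*} [Fintype n] [DecidableEq n] {H ρ : Matrix n n ℂ}
    (hH : H.IsHermitian) (hρ : ρ.IsHermitian) (U : Matrix.unitaryGroup n ℂ) :
    ∃ S ∈ doublyStochastic ℝ n,
      ((U : Matrix n n ℂ) * ρ * star (U : Matrix n n ℂ) * H).trace.re =
        ∑ i, ∑ j, S i j * (hH.eigenvalues i * hρ.eigenvalues j) := by
  obtain ⟨V, hV⟩ := hH.exists_unitary_diagonal
  obtain ⟨W, hW⟩ := hρ.exists_unitary_diagonal
  refine ⟨_, normSq_mem_doublyStochastic (star V * U * W), ?_⟩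
  set M : Matrix.unitaryGroup n ℂ := star V * U * W with hM
  have hMc : (M : Matrix n n ℂ) = star (V : Matrix n n ℂ) * U * W := rfl
  have : ((U : Matrix n n ℂ) * ρ * star (U : Matrix n n ℂ) * H).trace =
      ((M : Matrix n n ℂ) * diagonal (fun i => (hρ.eigenvalues i : ℂ)) *
        star (M : Matrix n n ℂ) * diagonal (fun i => (hH.eigenvalues i : ℂ))).trace := by
    conv_lhs => rw [hV, hW, ← Matrix.mul_assoc, Matrix.trace_mul_comm]
    rw [hMc]
    simp only [star_mul, star_star, Matrix.mul_assoc]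
  rw [this, Matrix.trace, Complex.re_sum]
  refine Finset.sum_congr rfl fun i _ => ?_
  rw [Matrix.diag_apply, Matrix.mul_diagonal, Matrix.mul_apply, Finset.sum_mul, Complex.re_sum]
  refine Finset.sum_congr rfl fun j _ => ?_
  rw [Matrix.mul_diagonal, star_apply, RCLike.star_def, mul_right_comm (M.1 i j), Complex.mul_conj]
  simp only [of_apply, ← Complex.ofReal_mul, Complex.ofReal_re]
  ring

/-- Two-sided rearrangement bound for `Tr[UρU†H]`. -/
theorem trace_conj_mul_re_mem_Icc {d : ℕ} {H ρ : Matrix (Fin d) (Fin d) ℂ}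
    (hH : H.IsHermitian) (hρ : ρ.IsHermitian) (U : Matrix.unitaryGroup (Fin d) ℂ)
    (ε : Fin d → ℝ) (hεmono : Monotone ε)
    (hεeig : ∃ σ : Equiv.Perm (Fin d), ∀ i, ε i = hH.eigenvalues (σ i))
    (lam : Fin d → ℝ) (hlamanti : Antitone lam)
    (hlameig : ∃ σ : Equiv.Perm (Fin d), ∀ i, lam i = hρ.eigenvalues (σ i)) :
    ((U : Matrix (Fin d) (Fin d) ℂ) * ρ * star (U : Matrix (Fin d) (Fin d) ℂ) * H).trace.re ∈
      Set.Icc (∑ j, lam j * ε j) (∑ j, lam j.rev * ε j) := by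
  obtain ⟨S, hS, hSeq⟩ := trace_conj_mul_re_eq hH hρ U
  obtain ⟨σ, hσ⟩ := hεeig
  obtain ⟨τ, hτ⟩ := hlameig
  have hh : ∀ i, hH.eigenvalues i = ε (σ.symm i) := fun i => by simp [hσ]
  have hl : ∀ i, hρ.eigenvalues i = lam (τ.symm i) := fun i => by simp [hτ]
  have hperm : ∀ π : Equiv.Perm (Fin d), ∑ i, hH.eigenvalues i * hρ.eigenvalues (π i) =
      ∑ i, ε i * lam ((σ.trans (π.trans τ.symm)) i) := fun π => by
    rw [← Equiv.sum_comp σ]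
    simp [hh, hl]
  rw [hSeq]
  constructor
  · have := sum_mul_mul_doublyStochastic_le hS hH.eigenvalues (fun j => -hρ.eigenvalues j)
      (-∑ j, lam j * ε j) (fun π => by
        simp only [mul_neg, Finset.sum_neg_distrib, neg_le_neg_iff]
        rw [hperm]
        have := (hεmono.antivary hlamanti).sum_mul_le_sum_mul_comp_perm
          (σ := σ.trans (π.trans τ.symm))
        simpa [mul_comm] using this)
    simp only [mul_neg, Finset.sum_neg_distrib, neg_le_neg_iff] at this
    exact this
  · refine sum_mul_mul_doublyStochastic_le hS _ _ _ fun π => ?_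
    rw [hperm]
    have hrev : Monotone fun j : Fin d => lam j.rev := fun i j hij =>
      hlamanti (Fin.rev_le_rev.2 hij)
    have := (hεmono.monovary hrev).sum_mul_comp_perm_le_sum_mul
      (σ := (σ.trans (π.trans τ.symm)).trans Fin.revPerm)
    simpa [mul_comm] using this

theorem sum_sq_le_half_sq_sum_abs {n : Type*} [Fintype n] (g : n → ℝ) (hg : ∑ i, g i = 0) :
    ∑ i, g i ^ 2 ≤ (∑ i, |g i|) ^ 2 / 2 := by
  classical
  set s := ∑ i, |g i| with hs
  have h : ∀ i, |g i| ≤ s / 2 := fun i => by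
    have h1 := Finset.add_sum_erase Finset.univ g (Finset.mem_univ i)
    have h2 := Finset.add_sum_erase Finset.univ (fun j => |g j|) (Finset.mem_univ i)
    have h3 := Finset.abs_sum_le_sum_abs g (Finset.univ.erase i)
    have h4 : |g i| = |∑ j ∈ Finset.univ.erase i, g j| := by
      rw [← abs_neg (g i)]; congr 1; linarith
    linarith
  calc ∑ i, g i ^ 2 = ∑ i, |g i| * |g i| := by simp [sq]
    _ ≤ ∑ i, |g i| * (s / 2) := by gcongr with i; exact h i
    _ = s ^ 2 / 2 := by rw [← Finset.sum_mul, ← hs]; ring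

theorem Matrix.IsHermitian.I_smul_commutator {n : Type*} [Fintype n] {X A : Matrix n n ℂ}
    (hX : X.IsHermitian) (hA : A.IsHermitian) :
    (Complex.I • (X * A - A * X)).IsHermitian := by
  rw [Matrix.IsHermitian, conjTranspose_smul, conjTranspose_sub, conjTranspose_mul,
    conjTranspose_mul, hX.eq, hA.eq, RCLike.star_def, Complex.conj_I, neg_smul, ← smul_neg, neg_sub]

/-- If the orbit function `W ↦ Tr[W X W† A]` is bounded by `R`, then its gradient
`i[X, A]` has squared Frobenius norm at most `2 R²`. -/
theorem trace_sq_commutator_le {n : Type*} [Fintype n] [DecidableEq n] {X A : Matrix n n ℂ}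
    (hX : X.IsHermitian) (hA : A.IsHermitian) {R : ℝ}
    (hR : ∀ W : Matrix.unitaryGroup n ℂ,
      |((W : Matrix n n ℂ) * X * star (W : Matrix n n ℂ) * A).trace.re| ≤ R) :
    ((Complex.I • (X * A - A * X)) ^ 2).trace.re ≤ 2 * R ^ 2 := by
  set G := Complex.I • (X * A - A * X) with hGdef
  have hG : G.IsHermitian := hX.I_smul_commutator hA
  obtain ⟨V, hV⟩ := hG.exists_unitary_diagonal
  set g := hG.eigenvalues
  set sg : n → ℂ := fun i => if 0 ≤ g i then 1 else -1 with hsg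
  set K : Matrix n n ℂ := (V : Matrix n n ℂ) * diagonal sg * star (V : Matrix n n ℂ) with hK
  have hVV : star (V : Matrix n n ℂ) * (V : Matrix n n ℂ) = 1 := Unitary.coe_star_mul_self V
  have hVV' : (V : Matrix n n ℂ) * star (V : Matrix n n ℂ) = 1 := Unitary.coe_mul_star_self V
  have hconj : ∀ a b : n → ℂ, ((V : Matrix n n ℂ) * diagonal a * star (V : Matrix n n ℂ)) *
      ((V : Matrix n n ℂ) * diagonal b * star (V : Matrix n n ℂ)) =
      (V : Matrix n n ℂ) * diagonal (fun i => a i * b i) * star (V : Matrix n n ℂ) := by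
    intro a b
    calc _ = (V : Matrix n n ℂ) * (diagonal a * (star (V : Matrix n n ℂ) * (V : Matrix n n ℂ)) *
          diagonal b) * star (V : Matrix n n ℂ) := by simp only [Matrix.mul_assoc]
      _ = _ := by rw [hVV, Matrix.mul_one, diagonal_mul_diagonal]
  have htr : ∀ a : n → ℂ, ((V : Matrix n n ℂ) * diagonal a * star (V : Matrix n n ℂ)).trace =
      ∑ i, a i := by
    intro a
    rw [Matrix.trace_mul_comm, ← Matrix.mul_assoc, hVV, Matrix.one_mul, trace_diagonal]
  have hKK : K * K = 1 := by
    rw [hK, hconj, show (fun i => sg i * sg i) = fun _ => 1 by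
      funext i; simp only [hsg]; split_ifs <;> simp, diagonal_one, Matrix.mul_one, hVV']
  have hKs : star K = K := by
    rw [hK, star_mul, star_mul, star_star, ← Matrix.mul_assoc]
    congr 2
    rw [star_eq_conjTranspose, diagonal_conjTranspose]
    congr 1
    funext i
    simp only [hsg, Pi.star_apply]
    split_ifs <;> simp
  have htrG : ∑ i, g i = 0 := by
    have h1 : G.trace = 0 := by
      rw [hGdef, trace_smul, trace_sub, Matrix.trace_mul_comm, sub_self, smul_zero]
    rw [hV, htr] at h1
    exact_mod_cast h1
  have htrG2 : (G ^ 2).trace.re = ∑ i, g i ^ 2 := by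
    rw [sq, hV, hconj, htr, Complex.re_sum]
    simp [sq, g]
  have htrKG : (K * G).trace.re = ∑ i, |g i| := by
    rw [hV, hK, hconj, htr, Complex.re_sum]
    refine Finset.sum_congr rfl fun i _ => ?_
    simp only [hsg]
    split_ifs with h
    · simp [g, abs_of_nonneg h]
    · simp [g, abs_of_neg (not_le.1 h)]
  set c : ℂ := Complex.ofReal (Real.sqrt 2)⁻¹ with hc
  have hcs : star c = c := by simp [hc]
  have hcc : c * c = 1 / 2 := by
    rw [hc, ← Complex.ofReal_mul, ← mul_inv, Real.mul_self_sqrt (by norm_num)]; norm_num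
  have hrot : ∀ u : ℂ, u * u = -1 → star u = -u →
      c • (1 + u • K) ∈ Matrix.unitaryGroup n ℂ := by
    intro u hu hus
    rw [mem_unitaryGroup_iff, star_smul, star_add, star_one, star_smul, hKs, hus, hcs,
      smul_mul_smul_comm, hcc, add_mul, mul_add, mul_add, smul_mul_smul_comm, hKK]
    rw [mul_neg, hu]
    simp only [Matrix.one_mul, Matrix.mul_one, neg_smul, neg_neg, one_smul]
    rw [show (1 : Matrix n n ℂ) + -(u • K) + (u • K + 1) = (2 : ℂ) • 1 by rw [two_smul]; abel,
      smul_smul]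
    norm_num
  have hp := hR ⟨_, hrot Complex.I (by simp) (by simp)⟩
  have hm := hR ⟨_, hrot (-Complex.I) (by simp) (by simp)⟩
  have hdiff : ((c • (1 + Complex.I • K)) * X * star (c • (1 + Complex.I • K)) * A).trace -
      ((c • (1 + (-Complex.I) • K)) * X * star (c • (1 + (-Complex.I) • K)) * A).trace =
      (K * G).trace := by
    have e : ∀ u : ℂ, star u = -u → ((c • (1 + u • K)) * X * star (c • (1 + u • K)) * A).trace =
        (1 / 2) * ((X * A).trace + u * (K * X * A).trace - u * (X * K * A).trace
          - u * u * (K * X * K * A).trace) := by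
      intro u hus
      rw [star_smul, star_add, star_one, star_smul, hKs, hus, hcs]
      simp only [smul_mul_assoc, mul_smul_comm, smul_smul, add_mul, mul_add, Matrix.one_mul,
        Matrix.mul_one, trace_smul, trace_add, neg_smul, mul_neg, neg_mul, trace_neg, smul_eq_mul]
      rw [← hcc]
      ring
    rw [e _ (by simp), e _ (by simp)]
    have h1 : (X * K * A).trace = (K * (A * X)).trace := by
      rw [Matrix.mul_assoc, Matrix.trace_mul_comm, Matrix.mul_assoc]
    rw [h1, hGdef, mul_smul_comm, trace_smul, Matrix.mul_sub, trace_sub, smul_eq_mul,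
      Matrix.mul_assoc K X A]
    ring
  have hdiff' := congrArg Complex.re hdiff
  rw [Complex.sub_re, htrKG] at hdiff'
  have hs : ∑ i, |g i| ≤ 2 * R := by
    rw [← hdiff']
    linarith [(abs_le.1 hp).2, (abs_le.1 hm).1]
  have hs0 : 0 ≤ ∑ i, |g i| := Finset.sum_nonneg fun i _ => abs_nonneg _
  rw [htrG2]
  nlinarith [sum_sq_le_half_sq_sum_abs g htrG]

instance unitaryGroup.compactSpace {n : Type*} [Fintype n] [DecidableEq n] :
    CompactSpace (Matrix.unitaryGroup n ℂ) := by
  refine isCompact_iff_compactSpace.1 ?_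
  have hclosed : IsClosed (Matrix.unitaryGroup n ℂ : Set (Matrix n n ℂ)) := by
    have : (Matrix.unitaryGroup n ℂ : Set (Matrix n n ℂ)) = {U | U * star U = 1} := by
      ext U; exact mem_unitaryGroup_iff
    rw [this]
    exact isClosed_eq (by fun_prop) continuous_const
  refine (isCompact_univ_pi fun _ => isCompact_univ_pi fun _ =>
    isCompact_closedBall (0 : ℂ) 1).of_isClosed_subset hclosed ?_
  intro U hU i _ j _
  simpa using entry_norm_bound_of_unitary hU i j

theorem unitaryGroup.integrable_of_continuous {d : ℕ} {E : Type*} [NormedAddCommGroup E]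
    [SecondCountableTopology E]
    (μ : Measure (Matrix.unitaryGroup (Fin d) ℂ)) [IsFiniteMeasure μ]
    {f : Matrix.unitaryGroup (Fin d) ℂ → E} (hf : Continuous f) : Integrable f μ := by
  obtain ⟨C, hC⟩ := isCompact_univ.exists_bound_of_continuousOn hf.continuousOn
  exact Integrable.of_bound hf.aestronglyMeasurable C
    (Filter.Eventually.of_forall fun x => hC x trivial)

theorem continuous_unitary_conj {n : Type*} [Fintype n] [DecidableEq n] (B : Matrix n n ℂ) :
    Continuous fun U : Matrix.unitaryGroup n ℂ =>
      (U : Matrix n n ℂ) * B * star (U : Matrix n n ℂ) := by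
  fun_prop

open scoped Matrix.Norms.Operator in
theorem exp_smul_mem_unitaryGroup {n : Type*} [Fintype n] [DecidableEq n] {K : Matrix n n ℂ}
    (hK : K.IsHermitian) (s : ℝ) :
    NormedSpace.exp (s • (Complex.I • K)) ∈ Matrix.unitaryGroup n ℂ := by
  have h : star (s • (Complex.I • K)) = -(s • (Complex.I • K)) := by
    rw [star_smul, star_smul, star_eq_conjTranspose, hK.eq]
    simp
  rw [mem_unitaryGroup_iff, star_eq_conjTranspose, ← Matrix.exp_conjTranspose,
    ← star_eq_conjTranspose, h, Matrix.exp_neg]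
  exact Matrix.mul_nonsing_inv _ ((Matrix.isUnit_iff_isUnit_det _).1 (Matrix.isUnit_exp _))

open scoped Matrix.Norms.L2Operator in
/-- Integrals of Lie derivatives along the conjugation orbit vanish. -/
theorem integral_lieDeriv_eq_zero {d : ℕ} (μ : Measure (Matrix.unitaryGroup (Fin d) ℂ))
    [μ.IsMulLeftInvariant] [IsFiniteMeasure μ] (B : Matrix (Fin d) (Fin d) ℂ)
    {K : Matrix (Fin d) (Fin d) ℂ} (hK : K.IsHermitian) {Φ Ψ : Matrix (Fin d) (Fin d) ℂ → ℂ}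
    (hΦ : Continuous Φ) (hΨ : Continuous Ψ)
    (hderiv : ∀ (Z : ℝ → Matrix (Fin d) (Fin d) ℂ) (s : ℝ),
      HasDerivAt Z (Complex.I • (K * Z s - Z s * K)) s →
        HasDerivAt (fun s => Φ (Z s)) (Ψ (Z s)) s) :
    ∫ U : Matrix.unitaryGroup (Fin d) ℂ,
      Ψ ((U : Matrix (Fin d) (Fin d) ℂ) * B * star (U : Matrix (Fin d) (Fin d) ℂ)) ∂μ = 0 := by
  set conj : Matrix.unitaryGroup (Fin d) ℂ → Matrix (Fin d) (Fin d) ℂ := fun U =>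
    (U : Matrix (Fin d) (Fin d) ℂ) * B * star (U : Matrix (Fin d) (Fin d) ℂ) with hconj
  have hcont : Continuous conj := continuous_unitary_conj B
  set W : ℝ → Matrix.unitaryGroup (Fin d) ℂ := fun s => ⟨_, exp_smul_mem_unitaryGroup hK s⟩ with hW
  have hWd : ∀ s, HasDerivAt (fun s => (W s : Matrix (Fin d) (Fin d) ℂ))
      ((Complex.I • K) * W s) s := fun s => hasDerivAt_exp_smul_const' (𝕂 := ℝ) (Complex.I • K) s
  have hpath : ∀ U s, HasDerivAt (fun s => conj (W s * U))
      (Complex.I • (K * conj (W s * U) - conj (W s * U) * K)) s := by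
    intro U s
    have h1 := ((hWd s).mul_const (conj U)).mul (hWd s).star
    have e : (fun s => conj (W s * U)) = fun s =>
        (W s : Matrix (Fin d) (Fin d) ℂ) * conj U * star (W s : Matrix (Fin d) (Fin d) ℂ) := by
      funext s
      simp only [hconj, Submonoid.coe_mul, star_mul, Matrix.mul_assoc]
    rw [e, show conj (W s * U) = (W s : Matrix (Fin d) (Fin d) ℂ) * conj U *
      star (W s : Matrix (Fin d) (Fin d) ℂ) from congrFun e s]
    refine h1.congr_deriv ?_
    have hKs : star K = K := hK
    rw [star_mul, star_smul, hKs]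
    simp only [Matrix.smul_mul, Matrix.mul_smul, Matrix.mul_neg, Matrix.mul_assoc, RCLike.star_def,
      Complex.conj_I, neg_smul, smul_neg, smul_add, sub_eq_add_neg]
  obtain ⟨C, hC⟩ := isCompact_univ.exists_bound_of_continuousOn (hΨ.comp hcont).continuousOn
  have hmain := (hasDerivAt_integral_of_dominated_loc_of_deriv_le (μ := μ) (𝕜 := ℝ)
    (F := fun s U => Φ (conj (W s * U))) (F' := fun s U => Ψ (conj (W s * U))) (x₀ := 0)
    (s := Set.univ) (bound := fun _ => C) Filter.univ_mem
    (Filter.Eventually.of_forall fun s =>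
      (hΦ.comp (hcont.comp (continuous_const.mul continuous_id))).aestronglyMeasurable)
    (unitaryGroup.integrable_of_continuous μ
      (hΦ.comp (hcont.comp (continuous_const.mul continuous_id))))
    (hΨ.comp (hcont.comp (continuous_const.mul continuous_id))).aestronglyMeasurable
    (Filter.Eventually.of_forall fun U s _ => hC (W s * U) trivial)
    (integrable_const C)
    (Filter.Eventually.of_forall fun U s _ => hderiv _ s (hpath U s))).2
  have hconst : (fun s => ∫ U, Φ (conj (W s * U)) ∂μ) = fun _ => ∫ U, Φ (conj U) ∂μ := by
    funext s
    exact integral_mul_left_eq_self (fun U => Φ (conj U)) (W s)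
  rw [hconst] at hmain
  have h0 := hmain.unique (hasDerivAt_const _ _)
  rw [← h0]
  exact (integral_mul_left_eq_self (fun U => Ψ (conj U)) (W 0)).symm

/-- The Lie derivative `i[A, K]` of the observable `A` in direction `K`. -/
def lieObs {n : Type*} [Fintype n] (A K : Matrix n n ℂ) : Matrix n n ℂ :=
  Complex.I • (A * K - K * A)

theorem trace_commutator_mul {n : Type*} [Fintype n] (Z A K : Matrix n n ℂ) :
    (Complex.I • (K * Z - Z * K) * A).trace = (Z * lieObs A K).trace := by
  have h : (K * Z * A).trace = (Z * (A * K)).trace := by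
    rw [Matrix.mul_assoc, Matrix.trace_mul_comm, Matrix.mul_assoc]
  rw [lieObs, Matrix.smul_mul, Matrix.mul_smul, trace_smul, trace_smul, Matrix.sub_mul,
    Matrix.mul_sub, trace_sub, trace_sub, h, Matrix.mul_assoc Z K A]

theorem lieObs_add_smul {n : Type*} [Fintype n] (A P Q : Matrix n n ℂ) (c : ℂ) :
    lieObs A (P + c • Q) = lieObs A P + c • lieObs A Q := by
  simp only [lieObs, Matrix.mul_add, Matrix.add_mul, Matrix.mul_smul, Matrix.smul_mul]
  module

open scoped Matrix.Norms.L2Operator in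
theorem hasDerivAt_trace_mul {n : Type*} [Fintype n] [DecidableEq n] (A : Matrix n n ℂ)
    {Z : ℝ → Matrix n n ℂ} {Z' : Matrix n n ℂ} {s : ℝ} (hZ : HasDerivAt Z Z' s) :
    HasDerivAt (fun s => (Z s * A).trace) ((Z' * A).trace) s :=
  ((LinearMap.toContinuousLinearMap
    ((Matrix.traceLinearMap n ℝ ℂ).comp (LinearMap.mulRight ℝ A))).hasFDerivAt.comp_hasDerivAt s
      hZ :)

/-- Integration by parts in directions `K` and `L` on the conjugation orbit. -/
theorem integral_trace_pow_parts {d : ℕ} (μ : Measure (Matrix.unitaryGroup (Fin d) ℂ))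
    [μ.IsMulLeftInvariant] [IsFiniteMeasure μ] (A B K L : Matrix (Fin d) (Fin d) ℂ) (m : ℕ) :
    ∫ U : Matrix.unitaryGroup (Fin d) ℂ, (fun Z : Matrix (Fin d) (Fin d) ℂ =>
      m * (Z * A).trace ^ (m - 1) * (Z * lieObs A K).trace * (Z * lieObs A L).trace +
        (Z * A).trace ^ m * (Z * lieObs (lieObs A L) K).trace)
      ((U : Matrix (Fin d) (Fin d) ℂ) * B * star (U : Matrix (Fin d) (Fin d) ℂ)) ∂μ = 0 := by
  have herm : ∀ K : Matrix (Fin d) (Fin d) ℂ, K.IsHermitian →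
      ∫ U : Matrix.unitaryGroup (Fin d) ℂ, (fun Z : Matrix (Fin d) (Fin d) ℂ =>
      m * (Z * A).trace ^ (m - 1) * (Z * lieObs A K).trace * (Z * lieObs A L).trace +
        (Z * A).trace ^ m * (Z * lieObs (lieObs A L) K).trace)
      ((U : Matrix (Fin d) (Fin d) ℂ) * B * star (U : Matrix (Fin d) (Fin d) ℂ)) ∂μ = 0 := by
    intro K hK
    refine integral_lieDeriv_eq_zero μ B hK
      (Φ := fun Z => (Z * A).trace ^ m * (Z * lieObs A L).trace) (Ψ := fun Z =>
        m * (Z * A).trace ^ (m - 1) * (Z * lieObs A K).trace * (Z * lieObs A L).trace +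
        (Z * A).trace ^ m * (Z * lieObs (lieObs A L) K).trace) (by fun_prop) (by fun_prop) ?_
    intro Z s hZ
    have h1 := hasDerivAt_trace_mul A hZ
    have h2 := hasDerivAt_trace_mul (lieObs A L) hZ
    rw [trace_commutator_mul] at h1 h2
    exact (h1.pow m).mul h2
  have hInt : ∀ K : Matrix (Fin d) (Fin d) ℂ,
      Integrable (fun U : Matrix.unitaryGroup (Fin d) ℂ => (fun Z : Matrix (Fin d) (Fin d) ℂ =>
      m * (Z * A).trace ^ (m - 1) * (Z * lieObs A K).trace * (Z * lieObs A L).trace +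
        (Z * A).trace ^ m * (Z * lieObs (lieObs A L) K).trace)
      ((U : Matrix (Fin d) (Fin d) ℂ) * B * star (U : Matrix (Fin d) (Fin d) ℂ))) μ := by
    intro K
    exact unitaryGroup.integrable_of_continuous μ (by fun_prop)
  have hP : (realPart K : Matrix (Fin d) (Fin d) ℂ).IsHermitian := (realPart K).2
  have hQ : (imaginaryPart K : Matrix (Fin d) (Fin d) ℂ).IsHermitian := (imaginaryPart K).2
  have key := congrArg₂ (fun a b : ℂ => a + Complex.I * b) (herm _ hP) (herm _ hQ)
  simp only [mul_zero, add_zero] at key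
  rw [← integral_const_mul, ← integral_add (hInt _) ((hInt _).const_mul _)] at key
  rw [← key]
  congr 1
  funext U
  conv_lhs => rw [← realPart_add_I_smul_imaginaryPart K]
  simp only [lieObs_add_smul, Matrix.mul_add, Matrix.mul_smul, trace_add, trace_smul, smul_eq_mul]
  ring

theorem sum_trace_lieObs_single {n : Type*} [Fintype n] [DecidableEq n] (Z A : Matrix n n ℂ) :
    ∑ i, ∑ j, (Z * lieObs A (single i j 1)).trace * (Z * lieObs A (single j i 1)).trace =
      ((Complex.I • (Z * A - A * Z)) ^ 2).trace := by
  have h : ∀ i j, (Z * lieObs A (single i j 1)).trace = (Complex.I • (Z * A - A * Z)) j i := by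
    intro i j
    have e : (Z * lieObs A (single i j 1)).trace =
        (single i j 1 * (Complex.I • (Z * A - A * Z))).trace := by
      have h1 : (Z * (A * single i j 1)).trace = (single i j 1 * (Z * A)).trace := by
        rw [← Matrix.mul_assoc, Matrix.trace_mul_comm]
      have h2 : (Z * (single i j 1 * A)).trace = (single i j 1 * (A * Z)).trace := by
        rw [Matrix.trace_mul_comm, Matrix.mul_assoc]
      rw [lieObs, Matrix.mul_smul, Matrix.mul_smul, trace_smul, trace_smul, Matrix.mul_sub,
        Matrix.mul_sub, trace_sub, trace_sub, h1, h2]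
    rw [e, trace_single_mul, one_smul]
  simp only [h, sq]
  simp only [Matrix.trace, Matrix.diag_apply, Matrix.mul_apply]
  rw [Finset.sum_comm]

theorem sum_lieObs_lieObs_single {n : Type*} [Fintype n] [DecidableEq n] {A : Matrix n n ℂ}
    (hA : A.trace = 0) :
    ∑ i, ∑ j, lieObs (lieObs A (single j i 1)) (single i j 1) = -(2 * Fintype.card n : ℂ) • A := by
  have h : ∀ i j : n, lieObs (lieObs A (single j i 1)) (single i j 1) =
      -(A * single j j 1) - single i i 1 * A + single j j (A i i) + single i i (A j j) := by
    intro i j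
    have h1 : single j i (1 : ℂ) * A * single i j 1 = single j j (A i i) := by
      rw [single_mul_mul_single, one_mul, mul_one]
    have h2 : single i j (1 : ℂ) * A * single j i 1 = single i i (A j j) := by
      rw [single_mul_mul_single, one_mul, mul_one]
    have h3 : A * single j i (1 : ℂ) * single i j 1 = A * single j j 1 := by
      rw [Matrix.mul_assoc, single_mul_single_same, mul_one]
    have h4 : single i j (1 : ℂ) * single j i 1 * A = single i i 1 * A := by
      rw [single_mul_single_same, mul_one]
    rw [lieObs, lieObs]
    simp only [Matrix.smul_mul, Matrix.mul_smul, ← smul_sub, smul_smul, Complex.I_mul_I,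
      Matrix.sub_mul, Matrix.mul_sub, ← Matrix.mul_assoc, h1, h2, h3, h4]
    module
  have hs : ∑ i, single i i (1 : ℂ) = (1 : Matrix n n ℂ) := sum_single_one
  have ht : ∀ j : n, ∑ i, single j j (A i i) = (0 : Matrix n n ℂ) := fun j => by
    have := map_sum (singleAddMonoidHom j j : ℂ →+ Matrix n n ℂ) (fun i => A i i) Finset.univ
    simp only [singleAddMonoidHom_apply] at this
    rw [← this, show ∑ i, A i i = 0 from hA, single_zero]
  have s1 : ∑ _i : n, ∑ j, A * single j j (1 : ℂ) = (Fintype.card n : ℂ) • A := by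
    simp only [← Finset.mul_sum, hs, Matrix.mul_one, Finset.sum_const, Finset.card_univ,
      Nat.cast_smul_eq_nsmul]
  have s2 : ∑ i, ∑ _j : n, single i i (1 : ℂ) * A = (Fintype.card n : ℂ) • A := by
    rw [Finset.sum_comm]
    simp only [← Finset.sum_mul, hs, Matrix.one_mul, Finset.sum_const, Finset.card_univ,
      Nat.cast_smul_eq_nsmul]
  have s3 : ∑ i, ∑ j, single j j (A i i) = (0 : Matrix n n ℂ) := by
    rw [Finset.sum_comm]
    simp only [ht, Finset.sum_const_zero]
  simp only [h, Finset.sum_add_distrib, Finset.sum_sub_distrib, Finset.sum_neg_distrib, s1, s2, s3,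
    ht, Finset.sum_const_zero]
  module

/-- The Laplacian identity `2d ∫ f^(m+1) = m ∫ f^(m-1) |∇f|²` for `f(U) = Tr[UBU†A]`. -/
theorem integral_trace_pow_succ {d : ℕ} (μ : Measure (Matrix.unitaryGroup (Fin d) ℂ))
    [μ.IsMulLeftInvariant] [IsFiniteMeasure μ] {A : Matrix (Fin d) (Fin d) ℂ}
    (hA : A.trace = 0) (B : Matrix (Fin d) (Fin d) ℂ) (m : ℕ) :
    2 * d * ∫ U : Matrix.unitaryGroup (Fin d) ℂ,
      ((U : Matrix (Fin d) (Fin d) ℂ) * B * star (U : Matrix (Fin d) (Fin d) ℂ) * A).trace ^ (m + 1)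
        ∂μ =
    m * ∫ U : Matrix.unitaryGroup (Fin d) ℂ,
      ((U : Matrix (Fin d) (Fin d) ℂ) * B * star (U : Matrix (Fin d) (Fin d) ℂ) * A).trace ^ (m - 1)
      * ((Complex.I • ((U : Matrix (Fin d) (Fin d) ℂ) * B * star (U : Matrix (Fin d) (Fin d) ℂ) * A -
        A * ((U : Matrix (Fin d) (Fin d) ℂ) * B * star (U : Matrix (Fin d) (Fin d) ℂ)))) ^ 2).trace
        ∂μ := by
  have h0 : ∑ i, ∑ j, ∫ U : Matrix.unitaryGroup (Fin d) ℂ, (fun Z : Matrix (Fin d) (Fin d) ℂ =>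
      m * (Z * A).trace ^ (m - 1) * (Z * lieObs A (single i j 1)).trace *
        (Z * lieObs A (single j i 1)).trace +
        (Z * A).trace ^ m * (Z * lieObs (lieObs A (single j i 1)) (single i j 1)).trace)
      ((U : Matrix (Fin d) (Fin d) ℂ) * B * star (U : Matrix (Fin d) (Fin d) ℂ)) ∂μ = 0 :=
    Finset.sum_eq_zero fun i _ => Finset.sum_eq_zero fun j _ =>
      integral_trace_pow_parts μ A B _ _ m
  have hInt : ∀ i j, Integrable (fun U : Matrix.unitaryGroup (Fin d) ℂ =>
      (fun Z : Matrix (Fin d) (Fin d) ℂ =>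
      m * (Z * A).trace ^ (m - 1) * (Z * lieObs A (single i j 1)).trace *
        (Z * lieObs A (single j i 1)).trace +
        (Z * A).trace ^ m * (Z * lieObs (lieObs A (single j i 1)) (single i j 1)).trace)
      ((U : Matrix (Fin d) (Fin d) ℂ) * B * star (U : Matrix (Fin d) (Fin d) ℂ))) μ :=
    fun i j => unitaryGroup.integrable_of_continuous μ (by fun_prop)
  simp_rw [← integral_finsetSum Finset.univ (fun j _ => hInt _ j)] at h0
  rw [← integral_finsetSum _ (fun i _ => integrable_finsetSum _ (fun j _ => hInt i j))] at h0
  have hsum : ∀ Z : Matrix (Fin d) (Fin d) ℂ, ∑ i, ∑ j,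
      (m * (Z * A).trace ^ (m - 1) * (Z * lieObs A (single i j 1)).trace *
        (Z * lieObs A (single j i 1)).trace +
        (Z * A).trace ^ m * (Z * lieObs (lieObs A (single j i 1)) (single i j 1)).trace) =
      m * ((Z * A).trace ^ (m - 1) * ((Complex.I • (Z * A - A * Z)) ^ 2).trace) -
        2 * d * (Z * A).trace ^ (m + 1) := by
    intro Z
    simp only [Finset.sum_add_distrib, mul_assoc, ← Finset.mul_sum, ← trace_sum]
    rw [sum_trace_lieObs_single, sum_lieObs_lieObs_single hA, Matrix.mul_smul, trace_smul,
      Fintype.card_fin, smul_eq_mul]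
    ring
  simp only [hsum] at h0
  rw [integral_sub (unitaryGroup.integrable_of_continuous μ (by fun_prop))
    (unitaryGroup.integrable_of_continuous μ (by fun_prop)), integral_const_mul,
    integral_const_mul, sub_eq_zero] at h0
  exact h0.symm

theorem Matrix.IsHermitian.unitary_conj {n : Type*} [Fintype n] [DecidableEq n]
    {B : Matrix n n ℂ} (hB : B.IsHermitian) (U : Matrix n n ℂ) :
    (U * B * star U).IsHermitian :=
  isHermitian_mul_mul_conjTranspose U hB

theorem Matrix.IsHermitian.ofReal_re_trace_mul {n : Type*} [Fintype n] {X A : Matrix n n ℂ}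
    (hX : X.IsHermitian) (hA : A.IsHermitian) : (((X * A).trace.re : ℝ) : ℂ) = (X * A).trace := by
  rw [← Complex.conj_eq_iff_re, ← RCLike.star_def, ← trace_conjTranspose, conjTranspose_mul, hX.eq,
    hA.eq, Matrix.trace_mul_comm]

/-- Moment recursion for `f(U) = Tr[UBU†A]` with `|f| ≤ R`. -/
theorem integral_trace_re_pow_add_two_le {d : ℕ} (hd : 0 < d)
    (μ : Measure (Matrix.unitaryGroup (Fin d) ℂ))
    [μ.IsMulLeftInvariant] [IsFiniteMeasure μ] {A B : Matrix (Fin d) (Fin d) ℂ}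
    (hA : A.IsHermitian) (hB : B.IsHermitian) (hA0 : A.trace = 0) {R : ℝ}
    (hR : ∀ U : Matrix.unitaryGroup (Fin d) ℂ,
      |((U : Matrix (Fin d) (Fin d) ℂ) * B * star (U : Matrix (Fin d) (Fin d) ℂ) * A).trace.re| ≤ R)
    (k : ℕ) :
    ∫ U : Matrix.unitaryGroup (Fin d) ℂ,
      ((U : Matrix (Fin d) (Fin d) ℂ) * B * star (U : Matrix (Fin d) (Fin d) ℂ) * A).trace.re
        ^ (2 * (k + 1)) ∂μ ≤
    (2 * k + 1) * (R ^ 2 / d) * ∫ U : Matrix.unitaryGroup (Fin d) ℂ,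
      ((U : Matrix (Fin d) (Fin d) ℂ) * B * star (U : Matrix (Fin d) (Fin d) ℂ) * A).trace.re
        ^ (2 * k) ∂μ := by
  have hpar := integral_trace_pow_succ μ hA0 B (2 * k + 1)
  set X : Matrix.unitaryGroup (Fin d) ℂ → Matrix (Fin d) (Fin d) ℂ := fun U =>
    (U : Matrix (Fin d) (Fin d) ℂ) * B * star (U : Matrix (Fin d) (Fin d) ℂ) with hXdef
  have hXc : Continuous X := continuous_unitary_conj B
  have hXh : ∀ U, (X U).IsHermitian := fun U => hB.unitary_conj _
  have hf : ∀ U, (X U * A).trace = ((X U * A).trace.re : ℂ) := fun U =>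
    ((hXh U).ofReal_re_trace_mul hA).symm
  change 2 * d * ∫ U, (X U * A).trace ^ (2 * k + 1 + 1) ∂μ = ((2 * k + 1 : ℕ) : ℂ) *
    ∫ U, (X U * A).trace ^ (2 * k) * ((Complex.I • (X U * A - A * X U)) ^ 2).trace ∂μ at hpar
  change ∫ U, (X U * A).trace.re ^ (2 * (k + 1)) ∂μ ≤
    (2 * k + 1) * (R ^ 2 / d) * ∫ U, (X U * A).trace.re ^ (2 * k) ∂μ
  have hg : ∀ U, ((Complex.I • (X U * A - A * X U)) ^ 2).trace =
      (((Complex.I • (X U * A - A * X U)) ^ 2).trace.re : ℂ) := by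
    intro U
    have hG := (hXh U).I_smul_commutator hA
    rw [sq]
    exact (hG.ofReal_re_trace_mul hG).symm
  have hgle : ∀ U, ((Complex.I • (X U * A - A * X U)) ^ 2).trace.re ≤ 2 * R ^ 2 := by
    intro U
    refine trace_sq_commutator_le (hXh U) hA fun W => ?_
    have := hR (W * U)
    simpa only [hXdef, Submonoid.coe_mul, star_mul, Matrix.mul_assoc] using this
  have hreal : 2 * d * ∫ U, (X U * A).trace.re ^ (2 * k + 1 + 1) ∂μ = (2 * k + 1) *
      ∫ U, (X U * A).trace.re ^ (2 * k) * ((Complex.I • (X U * A - A * X U)) ^ 2).trace.re ∂μ := by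
    have e1 : ∫ U, (X U * A).trace ^ (2 * k + 1 + 1) ∂μ =
        ((∫ U, (X U * A).trace.re ^ (2 * k + 1 + 1) ∂μ : ℝ) : ℂ) := by
      rw [← integral_complex_ofReal]
      refine integral_congr_ae (Filter.Eventually.of_forall fun U => ?_)
      beta_reduce
      rw [hf U]
      push_cast
      rfl
    have e2 : ∫ U, (X U * A).trace ^ (2 * k) * ((Complex.I • (X U * A - A * X U)) ^ 2).trace ∂μ =
        ((∫ U, (X U * A).trace.re ^ (2 * k) *
          ((Complex.I • (X U * A - A * X U)) ^ 2).trace.re ∂μ : ℝ) : ℂ) := by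
      rw [← integral_complex_ofReal]
      refine integral_congr_ae (Filter.Eventually.of_forall fun U => ?_)
      beta_reduce
      rw [hf U, hg U]
      push_cast
      rfl
    rw [e1, e2] at hpar
    exact_mod_cast hpar
  have hle : ∫ U, (X U * A).trace.re ^ (2 * k) *
      ((Complex.I • (X U * A - A * X U)) ^ 2).trace.re ∂μ ≤
      ∫ U, (X U * A).trace.re ^ (2 * k) * (2 * R ^ 2) ∂μ := by
    refine integral_mono (unitaryGroup.integrable_of_continuous μ ?_)
      (unitaryGroup.integrable_of_continuous μ ?_) fun U => ?_
    · exact ((Complex.continuous_re.comp (by fun_prop)).pow _).mul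
        (Complex.continuous_re.comp (by fun_prop))
    · exact ((Complex.continuous_re.comp (by fun_prop)).pow _).mul continuous_const
    · exact mul_le_mul_of_nonneg_left (hgle U) (Even.pow_nonneg (even_two_mul k) _)
  rw [integral_mul_const] at hle
  have hd' : (0 : ℝ) < d := by exact_mod_cast hd
  rw [show 2 * (k + 1) = 2 * k + 1 + 1 by ring, mul_div_assoc', div_mul_eq_mul_div,
    le_div_iff₀ hd']
  have := mul_le_mul_of_nonneg_left hle (show (0 : ℝ) ≤ 2 * k + 1 by positivity)
  linarith

theorem permMatrix_mem_unitaryGroup {n : Type*} [Fintype n] [DecidableEq n] (σ : Equiv.Perm n) :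
    σ.permMatrix ℂ ∈ Matrix.unitaryGroup n ℂ := by
  rw [mem_unitaryGroup_iff, star_eq_conjTranspose, conjTranspose_permMatrix, ← permMatrix_mul,
    inv_mul_cancel, permMatrix_one]

theorem permMatrix_conj_apply {n : Type*} [Fintype n] [DecidableEq n] (σ : Equiv.Perm n)
    (X : Matrix n n ℂ) (i j : n) :
    (σ.permMatrix ℂ * X * star (σ.permMatrix ℂ)) i j = X (σ i) (σ j) := by
  rw [star_eq_conjTranspose, conjTranspose_permMatrix, Equiv.Perm.permMatrix,
    Equiv.Perm.permMatrix, PEquiv.mul_toMatrix_toPEquiv, PEquiv.toMatrix_toPEquiv_mul]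
  rfl

theorem integral_unitary_conj_invariant {d : ℕ} (μ : Measure (Matrix.unitaryGroup (Fin d) ℂ))
    [μ.IsMulLeftInvariant] (B : Matrix (Fin d) (Fin d) ℂ) (V : Matrix.unitaryGroup (Fin d) ℂ)
    (g : Matrix (Fin d) (Fin d) ℂ → ℝ) :
    ∫ U : Matrix.unitaryGroup (Fin d) ℂ, g ((V : Matrix (Fin d) (Fin d) ℂ) *
      ((U : Matrix (Fin d) (Fin d) ℂ) * B * star (U : Matrix (Fin d) (Fin d) ℂ)) *
        star (V : Matrix (Fin d) (Fin d) ℂ)) ∂μ =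
    ∫ U : Matrix.unitaryGroup (Fin d) ℂ,
      g ((U : Matrix (Fin d) (Fin d) ℂ) * B * star (U : Matrix (Fin d) (Fin d) ℂ)) ∂μ := by
  rw [← integral_mul_left_eq_self (fun U : Matrix.unitaryGroup (Fin d) ℂ =>
    g ((U : Matrix (Fin d) (Fin d) ℂ) * B * star (U : Matrix (Fin d) (Fin d) ℂ))) V]
  simp only [Submonoid.coe_mul, star_mul, Matrix.mul_assoc]

/-- Correlations of the diagonal entries of `UBU†` for traceless `B`. -/
theorem integral_diag_re_mul_diag_re {d : ℕ} (hd : 2 ≤ d)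
    (μ : Measure (Matrix.unitaryGroup (Fin d) ℂ)) [μ.IsMulLeftInvariant] [IsFiniteMeasure μ]
    {B : Matrix (Fin d) (Fin d) ℂ} (hB0 : B.trace = 0) :
    ∃ α : ℝ, ∀ i j, ∫ U : Matrix.unitaryGroup (Fin d) ℂ,
      (((U : Matrix (Fin d) (Fin d) ℂ) * B * star (U : Matrix (Fin d) (Fin d) ℂ)) i i).re *
      (((U : Matrix (Fin d) (Fin d) ℂ) * B * star (U : Matrix (Fin d) (Fin d) ℂ)) j j).re ∂μ =
        (if i = j then α + α / (d - 1) else 0) - α / (d - 1) := by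
  set X : Matrix.unitaryGroup (Fin d) ℂ → Matrix (Fin d) (Fin d) ℂ := fun U =>
    (U : Matrix (Fin d) (Fin d) ℂ) * B * star (U : Matrix (Fin d) (Fin d) ℂ) with hXdef
  have hXc : Continuous X := continuous_unitary_conj B
  set c : Fin d → Fin d → ℝ := fun i j => ∫ U, (X U i i).re * (X U j j).re ∂μ with hc
  have hperm : ∀ (σ : Equiv.Perm (Fin d)) i j, c (σ i) (σ j) = c i j := by
    intro σ i j
    have := integral_unitary_conj_invariant μ B ⟨_, permMatrix_mem_unitaryGroup σ⟩
      (fun Z => (Z i i).re * (Z j j).re)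
    simp only [permMatrix_conj_apply] at this
    exact this
  have hrow : ∀ i, ∑ j, c i j = 0 := by
    intro i
    have hInt : ∀ j, Integrable (fun U => (X U i i).re * (X U j j).re) μ := fun j =>
      unitaryGroup.integrable_of_continuous μ
        ((Complex.continuous_re.comp (by fun_prop)).mul (Complex.continuous_re.comp (by fun_prop)))
    simp only [hc]
    rw [← integral_finsetSum _ fun j _ => hInt j]
    have h0 : ∀ U, ∑ j, (X U i i).re * (X U j j).re = 0 := by
      intro U
      have htr : (X U).trace = 0 := by
        rw [hXdef, Matrix.trace_mul_comm, ← Matrix.mul_assoc, Unitary.coe_star_mul_self,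
          Matrix.one_mul, hB0]
      rw [← Finset.mul_sum, ← Complex.re_sum]
      have : ∑ j, X U j j = 0 := htr
      rw [this, Complex.zero_re, mul_zero]
    simp only [h0, integral_zero]
  have hd1 : (0 : ℝ) < d - 1 := by
    have : (2 : ℝ) ≤ d := by exact_mod_cast hd
    linarith
  let i₀ : Fin d := ⟨0, by omega⟩
  refine ⟨c i₀ i₀, fun i j => ?_⟩
  change c i j = _
  have hdiag : ∀ i, c i i = c i₀ i₀ := fun i => by
    simpa using hperm (Equiv.swap i₀ i) i₀ i₀
  split_ifs with hij
  · rw [← hij, hdiag]; ring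
  · have hoff : ∀ k ∈ Finset.univ.erase i, c i k = c i j := by
      intro k hk
      have hki := Finset.ne_of_mem_erase hk
      have := hperm (Equiv.swap k j) i k
      rw [Equiv.swap_apply_of_ne_of_ne (Ne.symm hki) hij, Equiv.swap_apply_left] at this
      exact this.symm
    have h1 := hrow i
    rw [← Finset.add_sum_erase _ _ (Finset.mem_univ i), Finset.sum_congr rfl hoff,
      Finset.sum_const, Finset.card_erase_of_mem (Finset.mem_univ i), Finset.card_univ,
      Fintype.card_fin, nsmul_eq_mul, Nat.cast_sub (by omega), Nat.cast_one, hdiag] at h1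
    field_simp
    linarith

/-- The variance of `Tr[UBU†A]` for traceless Hermitian `A` and `B`. -/
theorem integral_trace_re_sq {d : ℕ} (hd : 2 ≤ d)
    (μ : Measure (Matrix.unitaryGroup (Fin d) ℂ)) [μ.IsMulLeftInvariant] [IsProbabilityMeasure μ]
    {A B : Matrix (Fin d) (Fin d) ℂ} (hA : A.IsHermitian) (hB : B.IsHermitian)
    (hA0 : A.trace = 0) (hB0 : B.trace = 0) :
    ∫ U : Matrix.unitaryGroup (Fin d) ℂ,
      ((U : Matrix (Fin d) (Fin d) ℂ) * B * star (U : Matrix (Fin d) (Fin d) ℂ) * A).trace.re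
        ^ 2 ∂μ = (A ^ 2).trace.re * (B ^ 2).trace.re / ((d : ℝ) ^ 2 - 1) := by
  obtain ⟨α, hα⟩ := integral_diag_re_mul_diag_re hd μ hB0
  set X : Matrix.unitaryGroup (Fin d) ℂ → Matrix (Fin d) (Fin d) ℂ := fun U =>
    (U : Matrix (Fin d) (Fin d) ℂ) * B * star (U : Matrix (Fin d) (Fin d) ℂ) with hXdef
  have hXc : Continuous X := continuous_unitary_conj B
  have hXh : ∀ U, (X U).IsHermitian := fun U => hB.unitary_conj _
  change ∀ i j, ∫ U, (X U i i).re * (X U j j).re ∂μ = _ at hα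
  have hd2 : (2 : ℝ) ≤ d := by exact_mod_cast hd
  have hd1 : (d : ℝ) - 1 ≠ 0 := by linarith
  set κ : ℝ := α + α / (d - 1) with hκ
  have hdiag : ∀ a : Fin d → ℝ, ∑ i, a i = 0 →
      ∫ U, (X U * diagonal (fun i => (a i : ℂ))).trace.re ^ 2 ∂μ = κ * ∑ i, a i ^ 2 := by
    intro a ha
    have e : ∀ U, (X U * diagonal (fun i => (a i : ℂ))).trace.re ^ 2 =
        ∑ i, ∑ j, a i * a j * ((X U i i).re * (X U j j).re) := by
      intro U
      rw [Matrix.trace, Complex.re_sum, sq, Finset.sum_mul_sum]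
      refine Finset.sum_congr rfl fun i _ => Finset.sum_congr rfl fun j _ => ?_
      rw [diag_apply, diag_apply, mul_diagonal, mul_diagonal, Complex.re_mul_ofReal,
        Complex.re_mul_ofReal]
      ring
    have hInt : ∀ i j, Integrable (fun U => a i * a j * ((X U i i).re * (X U j j).re)) μ :=
      fun i j => unitaryGroup.integrable_of_continuous μ (continuous_const.mul
        ((Complex.continuous_re.comp (by fun_prop)).mul (Complex.continuous_re.comp (by fun_prop))))
    simp_rw [e]
    rw [integral_finsetSum _ fun i _ => integrable_finsetSum _ fun j _ => hInt i j]
    simp_rw [integral_finsetSum Finset.univ fun j _ => hInt _ j, integral_const_mul, hα]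
    have : ∀ i, ∑ j, a i * a j * ((if i = j then κ else 0) - α / (d - 1)) = κ * a i ^ 2 := by
      intro i
      simp only [mul_sub, Finset.sum_sub_distrib, mul_ite, mul_zero, Finset.sum_ite_eq,
        Finset.mem_univ, if_true]
      rw [← Finset.sum_mul, ← Finset.mul_sum, ha]
      ring
    simp_rw [this, ← Finset.mul_sum]
  have hquad : ∀ A : Matrix (Fin d) (Fin d) ℂ, A.IsHermitian → A.trace = 0 →
      ∫ U, (X U * A).trace.re ^ 2 ∂μ = κ * (A ^ 2).trace.re := by
    intro A hA hA0
    obtain ⟨V, hV⟩ := hA.exists_unitary_diagonal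
    set a := hA.eigenvalues
    have hVV : star (V : Matrix (Fin d) (Fin d) ℂ) * (V : Matrix (Fin d) (Fin d) ℂ) = 1 :=
      Unitary.coe_star_mul_self V
    have ha : ∑ i, a i = 0 := by
      rw [hV, Matrix.trace_mul_comm, ← Matrix.mul_assoc, hVV, Matrix.one_mul,
        trace_diagonal] at hA0
      exact_mod_cast hA0
    have ha2 : (A ^ 2).trace.re = ∑ i, a i ^ 2 := by
      have : (A ^ 2).trace =
          (diagonal (fun i => (a i : ℂ)) * diagonal (fun i => (a i : ℂ))).trace := by
        rw [sq, hV]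
        calc _ = (V * (diagonal (fun i => (a i : ℂ)) * (star (V : Matrix (Fin d) (Fin d) ℂ) * V) *
            diagonal (fun i => (a i : ℂ))) * star (V : Matrix (Fin d) (Fin d) ℂ)).trace := by
              simp only [Matrix.mul_assoc]
          _ = _ := by
            rw [Matrix.trace_mul_comm, ← Matrix.mul_assoc, hVV, Matrix.one_mul, Matrix.mul_one]
      rw [this, diagonal_mul_diagonal, trace_diagonal, Complex.re_sum]
      simp [sq]
    rw [ha2, ← hdiag a ha, ← integral_unitary_conj_invariant μ B (star V)
      (fun Z => (Z * diagonal (fun i => (a i : ℂ))).trace.re ^ 2)]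
    congr 1
    funext U
    congr 2
    rw [hV, Unitary.coe_star, star_star]
    conv_lhs => rw [← Matrix.mul_assoc, Matrix.trace_mul_comm]
    simp only [hXdef, Matrix.mul_assoc]
  have hre : ∀ i j, i ≠ j → ∫ U, (X U i j).re ^ 2 ∂μ = κ / 2 := by
    intro i j hij
    have h := hquad (single i j 1 + single j i 1)
      (by rw [Matrix.IsHermitian, conjTranspose_add, conjTranspose_single, conjTranspose_single,
            star_one, add_comm])
      (by simp [hij, hij.symm])
    have e1 : ∀ U, (X U * (single i j 1 + single j i 1)).trace.re ^ 2 =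
        4 * (X U i j).re ^ 2 := by
      intro U
      have hji : (X U j i).re = (X U i j).re := by
        rw [← (hXh U).apply i j, RCLike.star_def, Complex.conj_re]
      rw [Matrix.mul_add, trace_add, trace_mul_single, trace_mul_single, Complex.add_re]
      simp only [MulOpposite.op_one, one_smul, hji]
      ring
    have e2 : ((single i j 1 + single j i 1 : Matrix (Fin d) (Fin d) ℂ) ^ 2).trace.re = 2 := by
      rw [sq, Matrix.mul_add, Matrix.add_mul, Matrix.add_mul]
      simp [hij, hij.symm]
      norm_num
    simp_rw [e1] at h
    rw [e2, integral_const_mul] at h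
    linarith
  have him : ∀ i j, i ≠ j → ∫ U, (X U i j).im ^ 2 ∂μ = κ / 2 := by
    intro i j hij
    have h := hquad (single i j Complex.I + single j i (-Complex.I))
      (by rw [Matrix.IsHermitian, conjTranspose_add, conjTranspose_single, conjTranspose_single,
            star_neg, RCLike.star_def, Complex.conj_I, neg_neg, add_comm])
      (by simp [hij, hij.symm])
    have e1 : ∀ U, (X U * (single i j Complex.I + single j i (-Complex.I))).trace.re ^ 2 =
        4 * (X U i j).im ^ 2 := by
      intro U
      have hji : (X U j i).im = -(X U i j).im := by
        rw [← (hXh U).apply j i, RCLike.star_def, Complex.conj_im]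
      rw [Matrix.mul_add, trace_add, trace_mul_single, trace_mul_single, Complex.add_re]
      simp [hji]
      ring
    have e2 : ((single i j Complex.I + single j i (-Complex.I) :
        Matrix (Fin d) (Fin d) ℂ) ^ 2).trace.re = 2 := by
      rw [sq, Matrix.mul_add, Matrix.add_mul, Matrix.add_mul]
      simp [hij, hij.symm]
      norm_num
    simp_rw [e1] at h
    rw [e2, integral_const_mul] at h
    linarith
  have hnorm : (B ^ 2).trace.re = d * α + d * (d - 1) * κ := by
    have e1 : ∀ U, (B ^ 2).trace.re = ∑ i, ∑ j, ((X U i j).re ^ 2 + (X U i j).im ^ 2) := by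
      intro U
      have hUU : star (U : Matrix (Fin d) (Fin d) ℂ) * (U : Matrix (Fin d) (Fin d) ℂ) = 1 :=
        Unitary.coe_star_mul_self U
      have : (B ^ 2).trace = (X U * X U).trace := by
        calc (B ^ 2).trace = (U * (B * (star (U : Matrix (Fin d) (Fin d) ℂ) * U) * B) *
            star (U : Matrix (Fin d) (Fin d) ℂ)).trace := by
              rw [Matrix.trace_mul_comm, ← Matrix.mul_assoc, hUU, Matrix.one_mul, Matrix.mul_one,
                sq]
          _ = _ := by simp only [hXdef, Matrix.mul_assoc]
      rw [this, Matrix.trace, Complex.re_sum]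
      refine Finset.sum_congr rfl fun i _ => ?_
      rw [diag_apply, mul_apply, Complex.re_sum]
      refine Finset.sum_congr rfl fun j _ => ?_
      rw [← (hXh U).apply j i, RCLike.star_def, Complex.mul_conj, Complex.ofReal_re,
        Complex.normSq_apply]
      ring
    have hintre : ∀ i j, Integrable (fun U => (X U i j).re ^ 2) μ := fun i j =>
      unitaryGroup.integrable_of_continuous μ ((Complex.continuous_re.comp (by fun_prop)).pow 2)
    have hintim : ∀ i j, Integrable (fun U => (X U i j).im ^ 2) μ := fun i j =>
      unitaryGroup.integrable_of_continuous μ ((Complex.continuous_im.comp (by fun_prop)).pow 2)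
    have hInt : ∀ i j, Integrable (fun U => (X U i j).re ^ 2 + (X U i j).im ^ 2) μ :=
      fun i j => (hintre i j).add (hintim i j)
    have hentry : ∀ i j, ∫ U, ((X U i j).re ^ 2 + (X U i j).im ^ 2) ∂μ =
        (if i = j then α - κ else 0) + κ := by
      intro i j
      rw [integral_add (hintre i j) (hintim i j)]
      split_ifs with hij
      · subst hij
        have h1 := hα i i
        have h2 : ∀ U, (X U i i).im ^ 2 = 0 := fun U => by
          rw [sq_eq_zero_iff, ← Complex.conj_eq_iff_im, ← RCLike.star_def, (hXh U).apply]
        simp_rw [h2, sq, h1]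
        simp [hκ]
      · rw [hre i j hij, him i j hij]
        ring
    calc (B ^ 2).trace.re = ∫ _ : Matrix.unitaryGroup (Fin d) ℂ, (B ^ 2).trace.re ∂μ := by simp
      _ = ∫ U, ∑ i, ∑ j, ((X U i j).re ^ 2 + (X U i j).im ^ 2) ∂μ :=
        integral_congr_ae (Filter.Eventually.of_forall e1)
      _ = ∑ i : Fin d, ∑ j : Fin d, ((if i = j then α - κ else 0) + κ) := by
        rw [integral_finsetSum _ fun i _ => integrable_finsetSum _ fun j _ => hInt i j]
        refine Finset.sum_congr rfl fun i _ => ?_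
        rw [integral_finsetSum _ fun j _ => hInt i j]
        exact Finset.sum_congr rfl fun j _ => hentry i j
      _ = _ := by
        simp [Finset.sum_add_distrib]
        ring
  rw [hquad A hA hA0, hnorm, hκ]
  have : (d : ℝ) ^ 2 - 1 ≠ 0 := by nlinarith
  field_simp
  ring

theorem Nat.factorial_two_mul_succ (k : ℕ) :
    (2 * (k + 1)).factorial =
      2 ^ (k + 1) * (k + 1).factorial * (2 * k + 1).doubleFactorial := by
  rw [show 2 * (k + 1) = 2 * k + 1 + 1 by ring, Nat.factorial_eq_mul_doubleFactorial,
    show 2 * k + 1 + 1 = 2 * (k + 1) by ring, Nat.doubleFactorial_two_mul]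

theorem le_doubleFactorial_mul_of_recursion {m : ℕ → ℝ} {c : ℝ} (hc : 0 ≤ c)
    (hrec : ∀ k : ℕ, m (k + 1) ≤ (2 * k + 1) * c * m k) (k : ℕ) :
    m (k + 1) ≤ (2 * k + 1).doubleFactorial * c ^ k * m 1 := by
  induction k with
  | zero => simp
  | succ k ih =>
    refine (hrec (k + 1)).trans ?_
    rw [show 2 * (k + 1) + 1 = 2 * k + 1 + 2 by ring, Nat.doubleFactorial_add_two]
    have h := mul_le_mul_of_nonneg_left ih
      (show (0 : ℝ) ≤ (2 * ((k + 1 : ℕ) : ℝ) + 1) * c by positivity)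
    refine h.trans (le_of_eq ?_)
    push_cast
    ring

/-- Termwise bounds for the deviation of the moment series from the Gaussian one, for moments
`s p` of a variable bounded by `R` that satisfy the recursion
`s (2k + 2) ≤ (2k + 1) (R² / d) s (2k)`. -/
theorem moment_series_term_bounds {s g : ℕ → ℝ} {R D S t : ℝ} (hR : 0 ≤ R) (hD : 0 < D)
    (hs0 : s 0 = 1) (hs2 : s 2 = S) (hseven : ∀ k, 0 ≤ s (2 * k))
    (hsodd : ∀ k, |s (2 * k + 1)| ≤ R * s (2 * k))
    (hrec : ∀ k : ℕ, s (2 * (k + 1)) ≤ (2 * k + 1) * (R ^ 2 / D) * s (2 * k))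
    (hg : ∀ p : ℕ, g p = if Even p then (Nat.doubleFactorial (p - 1) : ℝ) * S ^ (p / 2) else 0)
    (htD : (|t| * R) ^ 2 ≤ D) :
    t ^ 2 * S ≤ (|t| * R) ^ 2 / D ∧
    |t| ^ 1 / (Nat.factorial 1 : ℝ) * |s 1 - g 1| ≤ |t| * R ∧
    (∀ k : ℕ, 1 ≤ k → |t| ^ (2 * k) / ((2 * k).factorial : ℝ) * |s (2 * k) - g (2 * k)| ≤
      t ^ 2 * S / (2 ^ k * k.factorial)) ∧
    (∀ k : ℕ, 1 ≤ k → |t| ^ (2 * k + 1) / ((2 * k + 1).factorial : ℝ) *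
        |s (2 * k + 1) - g (2 * k + 1)| ≤
      |t| * R / (2 * k + 1) * (t ^ 2 * S / (2 ^ k * k.factorial))) := by
  have hS : 0 ≤ S := hs2 ▸ hseven 1
  set c : ℝ := R ^ 2 / D with hc
  have hc0 : 0 ≤ c := by positivity
  have hSc : S ≤ c := by simpa [hs0, hs2] using hrec 0
  have htc : t ^ 2 * c ≤ 1 := by
    rw [hc, mul_div_assoc', div_le_one hD, ← sq_abs t, ← mul_pow]
    exact htD
  have hmom : ∀ k : ℕ, s (2 * (k + 1)) ≤ (2 * k + 1).doubleFactorial * c ^ k * S := fun k =>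
    hs2 ▸ le_doubleFactorial_mul_of_recursion (m := fun k => s (2 * k)) hc0 hrec k
  have hser : ∀ k : ℕ, |t| ^ (2 * (k + 1)) / ((2 * (k + 1)).factorial : ℝ) *
      ((2 * k + 1).doubleFactorial * c ^ k * S) ≤
        t ^ 2 * S / (2 ^ (k + 1) * (k + 1).factorial) := by
    intro k
    have hdf : (0 : ℝ) < (2 * k + 1).doubleFactorial := by
      exact_mod_cast Nat.doubleFactorial_pos _
    have h : |t| ^ (2 * (k + 1)) / ((2 * (k + 1)).factorial : ℝ) *
        ((2 * k + 1).doubleFactorial * c ^ k * S) =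
        (t ^ 2 * c) ^ k * (t ^ 2 * S / (2 ^ (k + 1) * (k + 1).factorial)) := by
      rw [Nat.factorial_two_mul_succ, pow_mul, sq_abs]
      push_cast
      field_simp
      ring
    rw [h]
    exact mul_le_of_le_one_left (by positivity) (pow_le_one₀ (by positivity) htc)
  have hgodd : ∀ k, g (2 * k + 1) = 0 := fun k => by
    rw [hg, if_neg (by simp)]
  refine ⟨?_, ?_, ?_, ?_⟩
  · rw [mul_pow, sq_abs, mul_div_assoc]
    exact mul_le_mul_of_nonneg_left hSc (sq_nonneg t)
  · have h1 := hsodd 0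
    have h2 := hgodd 0
    simp only [mul_zero, zero_add, hs0, mul_one] at h1 h2
    rw [h2, sub_zero, pow_one, Nat.factorial_one, Nat.cast_one, div_one]
    exact mul_le_mul_of_nonneg_left h1 (abs_nonneg t)
  · intro k hk
    obtain ⟨k, rfl⟩ := Nat.exists_eq_add_of_le' hk
    refine le_trans (mul_le_mul_of_nonneg_left ?_ (by positivity)) (hser k)
    have hgk : g (2 * (k + 1)) = (2 * k + 1).doubleFactorial * S ^ k * S := by
      rw [hg, if_pos (even_two_mul _), Nat.mul_div_cancel_left _ two_pos,
        show 2 * (k + 1) - 1 = 2 * k + 1 by omega, pow_succ, mul_assoc]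
    have hgle : g (2 * (k + 1)) ≤ (2 * k + 1).doubleFactorial * c ^ k * S := by
      rw [hgk]
      gcongr
    have hg0 : 0 ≤ g (2 * (k + 1)) := by
      rw [hgk]
      positivity
    exact abs_sub_le_of_nonneg_of_le (hseven _) (hmom k) hg0 hgle
  · intro k hk
    obtain ⟨k, rfl⟩ := Nat.exists_eq_add_of_le' hk
    rw [hgodd, sub_zero]
    calc |t| ^ (2 * (k + 1) + 1) / ((2 * (k + 1) + 1).factorial : ℝ) * |s (2 * (k + 1) + 1)|
        ≤ |t| ^ (2 * (k + 1) + 1) / ((2 * (k + 1) + 1).factorial : ℝ) *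
          (R * ((2 * k + 1).doubleFactorial * c ^ k * S)) := by
          gcongr
          exact (hsodd _).trans (mul_le_mul_of_nonneg_left (hmom k) hR)
      _ = |t| * R / (2 * (k + 1 : ℕ) + 1) * (|t| ^ (2 * (k + 1)) / ((2 * (k + 1)).factorial : ℝ) *
          ((2 * k + 1).doubleFactorial * c ^ k * S)) := by
          rw [Nat.factorial_succ, pow_succ]
          push_cast
          field_simp
      _ ≤ _ := mul_le_mul_of_nonneg_left (hser k) (by positivity)

theorem unitary_conj_sub_smul_one_trace {d : ℕ} (hd : (d : ℂ) ≠ 0)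
    {H ρ : Matrix (Fin d) (Fin d) ℂ} (hρtr : ρ.trace = 1)
    (U : Matrix.unitaryGroup (Fin d) ℂ) :
    ((U : Matrix (Fin d) (Fin d) ℂ) * (ρ - ((d : ℂ))⁻¹ • (1 : Matrix (Fin d) (Fin d) ℂ)) *
        star (U : Matrix (Fin d) (Fin d) ℂ) *
        (H - (H.trace / (d : ℂ)) • (1 : Matrix (Fin d) (Fin d) ℂ))).trace =
      ((U : Matrix (Fin d) (Fin d) ℂ) * ρ * star (U : Matrix (Fin d) (Fin d) ℂ) * H).trace -
        H.trace / d := by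
  have hU : (U : Matrix (Fin d) (Fin d) ℂ) * star (U : Matrix (Fin d) (Fin d) ℂ) = 1 :=
    Unitary.coe_mul_star_self U
  have hUρ : ((U : Matrix (Fin d) (Fin d) ℂ) * ρ *
      star (U : Matrix (Fin d) (Fin d) ℂ)).trace = 1 := by
    rw [Matrix.trace_mul_comm, ← Matrix.mul_assoc, Unitary.coe_star_mul_self, Matrix.one_mul, hρtr]
  simp only [Matrix.mul_sub, Matrix.sub_mul, Matrix.mul_smul, Matrix.smul_mul, Matrix.mul_one, hU,
    Matrix.one_mul, trace_sub, trace_smul, hUρ, trace_one, Fintype.card_fin, smul_eq_mul]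
  field_simp
  ring

/-- **Statement 17.** Tail bound for the moment series: for `|t| < min{√(N*/Σ²), N*/ΔE_max}`,
`Σ_{p=N*}^∞ (|t|^p/p!)·|Σ^(p) − Σ_G^(p)| ≤ (1/⌈N*/2⌉!)·t²Σ²/(1 − t²Σ²/N*)
  + (1/N*!)·|t|ΔE_max/(1 − |t|ΔE_max/N*)`. -/
theorem moment_series_tail_bound (d : ℕ) (hd : 2 ≤ d)
    (μ : Measure (Matrix.unitaryGroup (Fin d) ℂ))
    [μ.IsHaarMeasure] [IsProbabilityMeasure μ]
    (H ρ : Matrix (Fin d) (Fin d) ℂ) (hH : H.IsHermitian)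
    (hρ : ρ.PosSemidef) (hρtr : ρ.trace = 1)
    (hΔHne : H - (H.trace / (d : ℂ)) • (1 : Matrix (Fin d) (Fin d) ℂ) ≠ 0)
    (hΔρne : ρ - ((d : ℂ))⁻¹ • (1 : Matrix (Fin d) (Fin d) ℂ) ≠ 0)
    -- sorted eigenvalue listings of `H` and `ρ`
    (ε : Fin d → ℝ) (hεmono : Monotone ε)
    (hεeig : ∃ σ : Equiv.Perm (Fin d), ∀ i, ε i = hH.eigenvalues (σ i))
    (lam : Fin d → ℝ) (hlamanti : Antitone lam)
    (hlameig : ∃ σ : Equiv.Perm (Fin d), ∀ i, lam i = hρ.1.eigenvalues (σ i))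
    -- the relevant scalar quantities
    (muH S2 DEmax : ℝ) (Nstar : ℕ)
    (hmuH : muH = H.trace.re / d)
    (hS2 : S2 = (((H - (H.trace / (d : ℂ)) • 1) ^ 2).trace.re
        * ((ρ - ((d : ℂ))⁻¹ • 1) ^ 2).trace.re) / ((d : ℝ) ^ 2 - 1))
    (hDE : DEmax = max |(∑ j, lam j * ε j) - muH| |(∑ j, lam j.rev * ε j) - muH|)
    (hDEpos : 0 < DEmax)
    (hN : Nstar = min ⌊Real.sqrt d⌋₊ ⌊((d : ℝ) / (2 * Real.sqrt 3)) ^ ((4 : ℝ) / 7)⌋₊)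
    -- the central moments and their Gaussian counterparts
    (Sp SG : ℕ → ℝ)
    (hSp : ∀ p : ℕ, Sp p = ∫ U : Matrix.unitaryGroup (Fin d) ℂ,
        (((U : Matrix (Fin d) (Fin d) ℂ) * ρ
            * star (U : Matrix (Fin d) (Fin d) ℂ) * H).trace.re - muH) ^ p ∂μ)
    (hSG : ∀ p : ℕ, SG p = if Even p
        then (Nat.doubleFactorial (p - 1) : ℝ) * S2 ^ (p / 2) else 0)
    -- condition on `t`
    (t : ℝ)
    (ht : |t| < min (Real.sqrt ((Nstar : ℝ) / S2)) ((Nstar : ℝ) / DEmax)) :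
    Summable (fun k : ℕ => (|t| ^ (Nstar + k) / ((Nstar + k).factorial : ℝ))
        * |Sp (Nstar + k) - SG (Nstar + k)|) ∧
      (∑' k : ℕ, (|t| ^ (Nstar + k) / ((Nstar + k).factorial : ℝ))
          * |Sp (Nstar + k) - SG (Nstar + k)|)
        ≤ (1 / ((⌈(Nstar : ℝ) / 2⌉₊).factorial : ℝ))
            * (t ^ 2 * S2 / (1 - t ^ 2 * S2 / Nstar))
          + (1 / (Nstar.factorial : ℝ))
            * (|t| * DEmax / (1 - |t| * DEmax / Nstar)) := by
  have hd0 : (0 : ℝ) < d := by exact_mod_cast (by omega : 0 < d)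
  have hdC : (d : ℂ) ≠ 0 := by exact_mod_cast hd0.ne'
  have hHtr : H.trace = (H.trace.re : ℂ) := by
    rw [eq_comm, ← Complex.conj_eq_iff_re, ← RCLike.star_def, ← trace_conjTranspose, hH.eq]
  set A := H - (H.trace / (d : ℂ)) • (1 : Matrix (Fin d) (Fin d) ℂ) with hAdef
  set B := ρ - ((d : ℂ))⁻¹ • (1 : Matrix (Fin d) (Fin d) ℂ) with hBdef
  have hA : A.IsHermitian := by
    refine hH.sub ?_
    rw [Matrix.IsHermitian, conjTranspose_smul, conjTranspose_one, hHtr]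
    simp
  have hB : B.IsHermitian := by
    refine hρ.1.sub ?_
    rw [Matrix.IsHermitian, conjTranspose_smul, conjTranspose_one]
    simp
  have hA0 : A.trace = 0 := by
    simp [hAdef, hdC]
  have hB0 : B.trace = 0 := by
    simp [hBdef, hρtr, hdC]
  set f : Matrix.unitaryGroup (Fin d) ℂ → ℝ := fun U =>
    ((U : Matrix (Fin d) (Fin d) ℂ) * B * star (U : Matrix (Fin d) (Fin d) ℂ) * A).trace.re
    with hfdef
  have hf : ∀ U : Matrix.unitaryGroup (Fin d) ℂ, f U = ((U : Matrix (Fin d) (Fin d) ℂ) * ρ *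
      star (U : Matrix (Fin d) (Fin d) ℂ) * H).trace.re - muH := by
    intro U
    simp only [hfdef]
    rw [unitary_conj_sub_smul_one_trace hdC hρtr, Complex.sub_re, Complex.div_natCast_re, hmuH]
  simp_rw [← hf] at hSp
  have hfR : ∀ U, |f U| ≤ DEmax := by
    intro U
    obtain ⟨hlo, hhi⟩ :=
      trace_conj_mul_re_mem_Icc hH hρ.1 U ε hεmono hεeig lam hlamanti hlameig
    rw [hf, hDE, max_comm, abs_le]
    have h1 := (neg_abs_le ((∑ j, lam j * ε j) - muH))
    have h2 := le_abs_self ((∑ j, lam j.rev * ε j) - muH)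
    have h3 := le_max_left |(∑ j, lam j.rev * ε j) - muH| |(∑ j, lam j * ε j) - muH|
    have h4 := le_max_right |(∑ j, lam j.rev * ε j) - muH| |(∑ j, lam j * ε j) - muH|
    constructor <;> linarith
  have hfc : Continuous f := Complex.continuous_re.comp
    (((continuous_unitary_conj B).matrix_mul continuous_const).matrix_trace)
  have hSp2 : Sp 2 = S2 := by
    rw [hSp, hS2]
    exact integral_trace_re_sq hd μ hA hB hA0 hB0
  have hSpeven : ∀ k, 0 ≤ Sp (2 * k) := fun k => by
    rw [hSp]
    exact integral_nonneg fun U => Even.pow_nonneg (even_two_mul k) _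
  have hSpodd : ∀ k, |Sp (2 * k + 1)| ≤ DEmax * Sp (2 * k) := fun k => by
    rw [hSp, hSp, ← integral_const_mul]
    refine (abs_integral_le_integral_abs).trans (integral_mono
      (unitaryGroup.integrable_of_continuous μ (hfc.pow _).abs)
      (unitaryGroup.integrable_of_continuous μ (continuous_const.mul (hfc.pow _))) fun U => ?_)
    beta_reduce
    rw [pow_succ, abs_mul, abs_of_nonneg (Even.pow_nonneg (even_two_mul k) (f U)), mul_comm]
    exact mul_le_mul_of_nonneg_right (hfR U) (Even.pow_nonneg (even_two_mul k) _)
  have hSprec : ∀ k : ℕ, Sp (2 * (k + 1)) ≤ (2 * k + 1) * (DEmax ^ 2 / d) * Sp (2 * k) :=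
    fun k => by
      rw [hSp, hSp]
      exact integral_trace_re_pow_add_two_le (by omega) μ hA hB hA0 hfR k
  obtain ⟨-, htN⟩ := lt_min_iff.mp ht
  rw [lt_div_iff₀ hDEpos] at htN
  have hy0 : 0 ≤ |t| * DEmax := by positivity
  have hN0 : (0 : ℝ) < Nstar := hy0.trans_lt htN
  have hN1 : 1 ≤ Nstar := by exact_mod_cast hN0
  have hN1' : (1 : ℝ) ≤ Nstar := by exact_mod_cast hN1
  have hNd : (Nstar : ℝ) ^ 2 ≤ d := by
    have h1 : (Nstar : ℝ) ≤ √(d : ℝ) := by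
      refine le_trans ?_ (Nat.floor_le (Real.sqrt_nonneg _))
      rw [hN]
      exact_mod_cast min_le_left _ _
    calc (Nstar : ℝ) ^ 2 ≤ √(d : ℝ) ^ 2 := by gcongr
      _ = (d : ℝ) := Real.sq_sqrt hd0.le
  have hyd : (|t| * DEmax) ^ 2 ≤ d := le_trans (by gcongr) hNd
  obtain ⟨hxz, hone, heven, hodd⟩ := moment_series_term_bounds hDEpos.le hd0
    (by simp [hSp]) hSp2 hSpeven hSpodd hSprec hSG hyd
  set y := |t| * DEmax with hy
  set x := t ^ 2 * S2 with hx
  have hx0 : 0 ≤ x := mul_nonneg (sq_nonneg t) (hSp2 ▸ hSpeven 1)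
  have hxlt : x < 1 := by
    refine hxz.trans_lt ((div_lt_one hd0).mpr (lt_of_lt_of_le ?_ hNd))
    gcongr
  have hxy : x * Nstar ≤ y := by
    calc x * Nstar ≤ y ^ 2 / d * Nstar := by gcongr
      _ = y * (y * Nstar) / d := by ring
      _ ≤ y := by
        rw [div_le_iff₀ hd0]
        refine mul_le_mul_of_nonneg_left (le_trans ?_ hNd) hy0
        rw [sq]
        gcongr
  obtain ⟨hsum, hle⟩ := tail_le_of_gaussian_type_bounds
    (T := fun p => |t| ^ p / (p.factorial : ℝ) * |Sp p - SG p|)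
    (fun p => by positivity) hx0 hxlt.le hy0 hN1 htN hxy hone heven hodd
  refine ⟨hsum, hle.trans ?_⟩
  have hceil : ⌈(Nstar : ℝ) / 2⌉₊ = (Nstar + 1) / 2 := by
    rw [Nat.ceil_eq_iff (by omega)]
    obtain ⟨m, hm | hm⟩ := Nat.even_or_odd' Nstar
    · rw [show (Nstar + 1) / 2 = m by omega, Nat.cast_sub (by omega), hm]
      push_cast
      constructor <;> linarith
    · rw [show (Nstar + 1) / 2 = m + 1 by omega, hm]
      push_cast
      constructor <;> linarith
  have hgeom : ∀ z : ℝ, 0 ≤ z → z < Nstar → z ≤ z / (1 - z / Nstar) := by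
    intro z hz hzN
    have hz1 : z / Nstar < 1 := (div_lt_one hN0).mpr hzN
    have hz0 : 0 ≤ z / Nstar := by positivity
    exact le_div_self hz (by linarith) (by linarith)
  rw [hceil, ← one_div_mul_eq_div, ← one_div_mul_eq_div (Nstar.factorial : ℝ)]
  gcongr
  · exact hgeom x hx0 (hxlt.trans_le hN1')
  · exact hgeom y hy0 htN
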